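/- Let q be a prime power and let f, g be monic irreducible homogeneous polynomials in F_q[x,y] each of degree at least 4. If Cross(f) = Cross(g), then f and g lie in the same orbit under the action of PGL₂(F_q). -/

import Mathlib

open MvPolynomial

/-- The dehomogenization `f(x,1)` of a bivariate polynomial. -/
noncomputable def dehom {F : Type*} [CommRing F] (f : MvPolynomial (Fin 2) F) :
    Polynomial F :=
  MvPolynomial.aeval ![Polynomial.X, 1] f

/-- A homogeneous bivariate polynomial of degree `n` is monic if the coefficient of
`x^n` is `1` (equivalently, `f(x,1)` is monic of degree `n`). -/
def MonicHom {F : Type*} [CommRing F] (f : MvPolynomial (Fin 2) F) (n : ℕ) : Prop :=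
  MvPolynomial.coeff (Finsupp.single (0 : Fin 2) n) f = 1

/-- Linear substitution of the variables of a bivariate polynomial by a matrix `N`:
`(substM N f)(v) = f(N·v)`. -/
noncomputable def substM {F : Type*} [Field F]
    (N : Matrix (Fin 2) (Fin 2) F) (f : MvPolynomial (Fin 2) F) :
    MvPolynomial (Fin 2) F :=
  MvPolynomial.aeval (fun i => C (N i 0) * X 0 + C (N i 1) * X 1) f

/-- The cross ratio `χ` of the first four Frobenius conjugates `α, α^q, α^{q²}, α^{q³}`
of `α`. -/
noncomputable def crossRatio {K : Type*} [Field K] (q : ℕ) (α : K) : K :=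
  ((α ^ q ^ 3 - α ^ q) * (α ^ q ^ 2 - α)) /
    ((α ^ q ^ 3 - α) * (α ^ q ^ 2 - α ^ q))

/-- The characteristic polynomial over `F` of an element `χ` of an extension of
degree `n`: the `(n/d)`-th power of the minimal polynomial of `χ`, where `d` is the
degree of the minimal polynomial. -/
noncomputable def charPolyOfElt (F : Type*) [Field F] {K : Type*} [Field K]
    [Algebra F K] (n : ℕ) (χ : K) : Polynomial F :=
  (minpoly F χ) ^ (n / (minpoly F χ).natDegree)

section CrossHelpers

/-- `f` is the homogenization of its dehomogenization. -/
lemma ch_hom_dehom {F : Type*} [Field F] {m : ℕ} {f : MvPolynomial (Fin 2) F}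
    (hf : f.IsHomogeneous m) : (dehom f).homogenize m = f :=
  Polynomial.homogenize_eq_of_isHomogeneous hf rfl

lemma ch_natDegree_le {F : Type*} [Field F] {m : ℕ} {f : MvPolynomial (Fin 2) F}
    (hf : f.IsHomogeneous m) : (dehom f).natDegree ≤ m := by
  have := MvPolynomial.aeval_natDegree_le (n := 1) f hf.totalDegree_le
    (![Polynomial.X, 1] : Fin 2 → Polynomial F) (by intro i; fin_cases i <;> simp)
  simpa [dehom] using this

lemma ch_coeff {F : Type*} [Field F] {m : ℕ} {f : MvPolynomial (Fin 2) F}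
    (hf : f.IsHomogeneous m) (hmon : MonicHom f m) : (dehom f).coeff m = 1 := by
  have h := Polynomial.coeff_homogenize (dehom f) m (Finsupp.single (0 : Fin 2) m)
  rw [ch_hom_dehom hf, hmon] at h
  simpa using h.symm

lemma ch_natDegree {F : Type*} [Field F] {m : ℕ} {f : MvPolynomial (Fin 2) F}
    (hf : f.IsHomogeneous m) (hmon : MonicHom f m) : (dehom f).natDegree = m :=
  le_antisymm (ch_natDegree_le hf)
    (Polynomial.le_natDegree_of_ne_zero (by rw [ch_coeff hf hmon]; exact one_ne_zero))

lemma ch_monic {F : Type*} [Field F] {m : ℕ} {f : MvPolynomial (Fin 2) F}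
    (hf : f.IsHomogeneous m) (hmon : MonicHom f m) : (dehom f).Monic := by
  rw [Polynomial.Monic, Polynomial.leadingCoeff, ch_natDegree hf hmon, ch_coeff hf hmon]

lemma ch_unit_dehom {F : Type*} [Field F] {p : Polynomial F} {d : ℕ} (hd : p.natDegree ≤ d)
    (hu : IsUnit (p.homogenize d)) : IsUnit p := by
  have := hu.map (MvPolynomial.aeval (![Polynomial.X, 1] : Fin 2 → Polynomial F))
  rwa [Polynomial.aeval_homogenize_X_one p hd] at this

lemma ch_irr {F : Type*} [Field F] {m : ℕ} {f : MvPolynomial (Fin 2) F}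
    (hf : f.IsHomogeneous m) (hmon : MonicHom f m) (hm : 4 ≤ m) (hirr : Irreducible f) :
    Irreducible (dehom f) := by
  refine ⟨fun hu => ?_, fun a b hab => ?_⟩
  · have := Polynomial.natDegree_eq_zero_of_isUnit hu
    rw [ch_natDegree hf hmon] at this; omega
  · have hne : a * b ≠ 0 := by rw [← hab]; exact (ch_monic hf hmon).ne_zero
    have hdeg : a.natDegree + b.natDegree = m := by
      rw [← Polynomial.natDegree_mul (left_ne_zero_of_mul hne) (right_ne_zero_of_mul hne),
        ← hab, ch_natDegree hf hmon]
    have h := Polynomial.homogenize_mul a b (le_refl a.natDegree) (le_refl b.natDegree)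
    rw [hdeg, ← hab, ch_hom_dehom hf] at h
    rcases hirr.isUnit_or_isUnit h with h | h
    · exact Or.inl (ch_unit_dehom le_rfl h)
    · exact Or.inr (ch_unit_dehom le_rfl h)

lemma ch_minpoly {F K : Type*} [Field F] [Field K] [Algebra F K] {m : ℕ}
    {f : MvPolynomial (Fin 2) F}
    (hf : f.IsHomogeneous m) (hmon : MonicHom f m) (hm : 4 ≤ m) (hirr : Irreducible f)
    {α : K} (hα : Polynomial.aeval α (dehom f) = 0) : minpoly F α = dehom f :=
  (minpoly.eq_of_irreducible_of_monic (ch_irr hf hmon hm hirr) hα (ch_monic hf hmon)).symm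

lemma ch_aeval_dehom {F K : Type*} [Field F] [Field K] [Algebra F K]
    (f : MvPolynomial (Fin 2) F) (x : K) :
    Polynomial.aeval x (dehom f) = MvPolynomial.aeval ![x, 1] f := by
  have : ((Polynomial.aeval x).comp (MvPolynomial.aeval
      (![Polynomial.X, 1] : Fin 2 → Polynomial F))) = MvPolynomial.aeval ![x, 1] := by
    ext i; fin_cases i <;> simp
  exact DFunLike.congr_fun this f

lemma ch_scale {F K : Type*} [Field F] [Field K] [Algebra F K] {m : ℕ}
    {f : MvPolynomial (Fin 2) F} (hf : f.IsHomogeneous m) (t : K) (v w : Fin 2 → K)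
    (hv : ∀ i, w i = t * v i) :
    MvPolynomial.aeval w f = t ^ m * MvPolynomial.aeval v f := by
  rw [MvPolynomial.aeval_def, MvPolynomial.aeval_def, MvPolynomial.eval₂_eq',
    MvPolynomial.eval₂_eq', Finset.mul_sum]
  refine Finset.sum_congr rfl fun d hd => ?_
  have h : d.weight 1 = m := hf (by simpa using hd)
  have h2 : d 0 + d 1 = m := by
    rw [← h]; simp [Finsupp.weight_apply, Finsupp.sum_fintype, Fin.sum_univ_two]
  simp only [Fin.prod_univ_two, hv, mul_pow, ← h2, pow_add]
  ring

lemma ch_aeval_subst {F K : Type*} [Field F] [Field K] [Algebra F K]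
    (N : Matrix (Fin 2) (Fin 2) F) (f : MvPolynomial (Fin 2) F) (v : Fin 2 → K) :
    MvPolynomial.aeval v (substM N f) = MvPolynomial.aeval
      (fun i => algebraMap F K (N i 0) * v 0 + algebraMap F K (N i 1) * v 1) f := by
  have : ((MvPolynomial.aeval v).comp (MvPolynomial.aeval
      (fun i => C (N i 0) * X 0 + C (N i 1) * X 1 : Fin 2 → MvPolynomial (Fin 2) F))) =
      MvPolynomial.aeval
      (fun i => algebraMap F K (N i 0) * v 0 + algebraMap F K (N i 1) * v 1) := by
    ext i; simp
  exact DFunLike.congr_fun this f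

lemma ch_subst_hom {F : Type*} [Field F] {m : ℕ} {f : MvPolynomial (Fin 2) F}
    (hf : f.IsHomogeneous m) (N : Matrix (Fin 2) (Fin 2) F) :
    (substM N f).IsHomogeneous m := by
  have := hf.aeval (n := 1)
    (fun i => C (N i 0) * X 0 + C (N i 1) * X 1 : Fin 2 → MvPolynomial (Fin 2) F) (by
      intro i
      refine MvPolynomial.IsHomogeneous.add ?_ ?_
      · simpa using (isHomogeneous_C (Fin 2) (N i 0)).mul (isHomogeneous_X F (0 : Fin 2))
      · simpa using (isHomogeneous_C (Fin 2) (N i 1)).mul (isHomogeneous_X F (1 : Fin 2)))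
  simpa [substM] using this

lemma ch_eval_one_zero {F K : Type*} [Field F] [Field K] [Algebra F K] {m : ℕ}
    {f : MvPolynomial (Fin 2) F}
    (hf : f.IsHomogeneous m) (hmon : MonicHom f m) :
    MvPolynomial.aeval (![1, 0] : Fin 2 → K) f = 1 := by
  rw [MvPolynomial.aeval_def, MvPolynomial.eval₂_eq',
    Finset.sum_eq_single (Finsupp.single (0 : Fin 2) m)]
  · have : MvPolynomial.coeff (Finsupp.single (0 : Fin 2) m) f = 1 := hmon
    simp [this]
  · intro d hd hne
    have h : d.weight 1 = m := hf (by simpa using hd)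
    have h2 : d 0 + d 1 = m := by
      rw [← h]; simp [Finsupp.weight_apply, Finsupp.sum_fintype, Fin.sum_univ_two]
    have h1 : d 1 ≠ 0 := by
      intro h0
      apply hne
      ext i; fin_cases i
      · simp; omega
      · simp [h0]
    simp [Fin.prod_univ_two, h1]
  · intro hd
    have : MvPolynomial.coeff (Finsupp.single (0 : Fin 2) m) f = 1 := hmon
    rw [MvPolynomial.notMem_support_iff] at hd
    rw [hd] at this; exact absurd this zero_ne_one

/-- The degree divides `k` when `x^(q^k) = x`. -/
lemma ch_deg_dvd {F K : Type*} [Field F] [Fintype F] [Field K] [Algebra F K]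
    {x : K} (hx : IsIntegral F x) {k : ℕ} (h : x ^ (Fintype.card F) ^ k = x) :
    (minpoly F x).natDegree ∣ k := by
  apply (minpoly.irreducible hx).natDegree_dvd_of_dvd_X_pow_card_pow_sub_X
  apply minpoly.dvd
  simp [Nat.card_eq_fintype_card, h]

lemma ch_mem {F K : Type*} [Field F] [Fintype F] [Field K] [Algebra F K]
    {x : K} (hx : IsIntegral F x) (h : x ^ (Fintype.card F) = x) :
    ∃ y : F, algebraMap F K y = x := by
  have := ch_deg_dvd hx (k := 1) (by simpa using h)
  have h1 := minpoly.natDegree_eq_one_iff.mp (Nat.dvd_one.mp this)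
  exact h1

lemma ch_key {F K : Type*} [Field F] [Fintype F] [Field K] [Algebra F K]
    [Algebra.IsAlgebraic F K] (σ : K →ₐ[F] K) (hσ : ∀ x, σ x = x ^ Fintype.card F)
    (a0 a1 a2 a3 b0 b1 b2 b3 : K)
    (ha1 : σ a0 = a1) (ha2 : σ a1 = a2) (ha3 : σ a2 = a3)
    (hb1 : σ b0 = b1) (hb2 : σ b1 = b2) (hb3 : σ b2 = b3)
    (ha01 : a0 ≠ a1) (ha12 : a1 ≠ a2) (ha13 : a1 ≠ a3) (ha23 : a2 ≠ a3) (ha03 : a0 ≠ a3)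
    (hb01 : b0 ≠ b1) (hb12 : b1 ≠ b2) (hb13 : b1 ≠ b3) (hb23 : b2 ≠ b3) (hb03 : b0 ≠ b3)
    (h : (a3 - a1) * (a2 - a0) / ((a3 - a0) * (a2 - a1)) =
      (b3 - b1) * (b2 - b0) / ((b3 - b0) * (b2 - b1))) :
    ∃ a b c d : F, a * d - b * c ≠ 0 ∧
      (algebraMap F K c * a0 + algebraMap F K d) * b0 =
        algebraMap F K a * a0 + algebraMap F K b := by
  rw [div_eq_div_iff (by simp [sub_eq_zero, ha12.symm, ha03.symm])
    (by simp [sub_eq_zero, hb12.symm, hb03.symm])] at h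
  obtain ⟨v, hv, hv0⟩ := (Matrix.exists_mulVec_eq_zero_iff
    (M := !![a0 * b0, b0, -a0, -1; a1 * b1, b1, -a1, -1; a2 * b2, b2, -a2, -1;
      a3 * b3, b3, -a3, -1])).mpr (by
    simp [Matrix.det_succ_row_zero, Fin.sum_univ_succ, Fin.succAbove]
    linear_combination h)
  have e0 := congrFun hv0 0
  have e1 := congrFun hv0 1
  have e2 := congrFun hv0 2
  have e3 := congrFun hv0 3
  simp [Matrix.mulVec, dotProduct, Fin.sum_univ_four] at e0 e1 e2 e3
  have hint : ∀ x : K, IsIntegral F x := fun x => Algebra.IsIntegral.isIntegral x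
  by_cases hc : v 0 = 0
  · simp only [hc, mul_zero, zero_add] at e0 e1 e2 e3
    have hd : v 1 ≠ 0 := by
      intro hd
      apply hv
      have h2 : v 2 = 0 := by
        have : (a0 - a1) * v 2 = 0 := by rw [hd] at e0 e1; linear_combination e1 - e0
        exact (mul_eq_zero.mp this).resolve_left (sub_ne_zero.mpr ha01)
      ext i; fin_cases i
      · exact hc
      · exact hd
      · exact h2
      · simpa [hd, h2] using e0
    obtain ⟨a, ha⟩ : ∃ a, a = v 2 / v 1 := ⟨_, rfl⟩
    obtain ⟨b, hb⟩ : ∃ b, b = v 3 / v 1 := ⟨_, rfl⟩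
    have f0 : b0 = a * a0 + b := by rw [ha, hb]; field_simp; linear_combination e0
    have f1 : b1 = a * a1 + b := by rw [ha, hb]; field_simp; linear_combination e1
    have f2 : b2 = a * a2 + b := by rw [ha, hb]; field_simp; linear_combination e2
    have s1 : b1 = σ a * a1 + σ b := by rw [← hb1, f0]; simp [ha1]
    have s2 : b2 = σ a * a2 + σ b := by rw [← hb2, f1]; simp [ha2]
    have ea : σ a = a := by
      have : (σ a - a) * (a1 - a2) = 0 := by linear_combination f1 - s1 - f2 + s2
      exact sub_eq_zero.mp ((mul_eq_zero.mp this).resolve_right (sub_ne_zero.mpr ha12))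
    have eb : σ b = b := by rw [ea] at s1; linear_combination f1 - s1
    obtain ⟨aF, rfl⟩ := ch_mem (hint a) (by rw [← hσ, ea])
    obtain ⟨bF, rfl⟩ := ch_mem (hint b) (by rw [← hσ, eb])
    refine ⟨aF, bF, 0, 1, ?_, by simpa using f0⟩
    simp only [mul_one, mul_zero, sub_zero]
    rintro rfl
    apply hb01
    rw [f0, f1]; simp
  · obtain ⟨d, hd⟩ : ∃ d, d = v 1 / v 0 := ⟨_, rfl⟩
    obtain ⟨a, ha⟩ : ∃ a, a = v 2 / v 0 := ⟨_, rfl⟩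
    obtain ⟨b, hb⟩ : ∃ b, b = v 3 / v 0 := ⟨_, rfl⟩
    have f0 : (a0 + d) * b0 = a * a0 + b := by rw [ha, hb, hd]; field_simp; linear_combination e0
    have f1 : (a1 + d) * b1 = a * a1 + b := by rw [ha, hb, hd]; field_simp; linear_combination e1
    have f2 : (a2 + d) * b2 = a * a2 + b := by rw [ha, hb, hd]; field_simp; linear_combination e2
    have f3 : (a3 + d) * b3 = a * a3 + b := by rw [ha, hb, hd]; field_simp; linear_combination e3
    have s1 : (a1 + σ d) * b1 = σ a * a1 + σ b := by
      have := congrArg σ f0; simpa [ha1, hb1] using this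
    have s2 : (a2 + σ d) * b2 = σ a * a2 + σ b := by
      have := congrArg σ f1; simpa [ha2, hb2] using this
    have s3 : (a3 + σ d) * b3 = σ a * a3 + σ b := by
      have := congrArg σ f2; simpa [ha3, hb3] using this
    have hdet : a * d - b ≠ 0 := by
      intro h0
      have g1 : (a1 + d) * (b1 - a) = 0 := by linear_combination f1 - h0
      have g2 : (a2 + d) * (b2 - a) = 0 := by linear_combination f2 - h0
      have g3 : (a3 + d) * (b3 - a) = 0 := by linear_combination f3 - h0
      grind
    obtain ⟨D, hD⟩ : ∃ D, D = σ d - d := ⟨_, rfl⟩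
    obtain ⟨A, hA⟩ : ∃ A, A = σ a - a := ⟨_, rfl⟩
    obtain ⟨B, hB⟩ : ∃ B, B = σ b - b := ⟨_, rfl⟩
    have q1 : A * a1 ^ 2 + (B + d * A - D * a) * a1 + (d * B - D * b) = 0 := by
      rw [hA, hB, hD]; linear_combination (a1 + σ d) * f1 - (a1 + d) * s1
    have q2 : A * a2 ^ 2 + (B + d * A - D * a) * a2 + (d * B - D * b) = 0 := by
      rw [hA, hB, hD]; linear_combination (a2 + σ d) * f2 - (a2 + d) * s2
    have q3 : A * a3 ^ 2 + (B + d * A - D * a) * a3 + (d * B - D * b) = 0 := by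
      rw [hA, hB, hD]; linear_combination (a3 + σ d) * f3 - (a3 + d) * s3
    have r12 : A * (a1 + a2) + (B + d * A - D * a) = 0 := by
      have : (a1 - a2) * (A * (a1 + a2) + (B + d * A - D * a)) = 0 := by
        linear_combination q1 - q2
      exact (mul_eq_zero.mp this).resolve_left (sub_ne_zero.mpr ha12)
    have r13 : A * (a1 + a3) + (B + d * A - D * a) = 0 := by
      have : (a1 - a3) * (A * (a1 + a3) + (B + d * A - D * a)) = 0 := by
        linear_combination q1 - q3
      exact (mul_eq_zero.mp this).resolve_left (sub_ne_zero.mpr ha13)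
    have hA0 : A = 0 := by
      have : A * (a2 - a3) = 0 := by linear_combination r12 - r13
      exact (mul_eq_zero.mp this).resolve_right (sub_ne_zero.mpr ha23)
    rw [hA0] at r12 q1
    have hD0 : D = 0 := by
      have : D * (a * d - b) = 0 := by linear_combination q1 - (a1 + d) * r12
      exact (mul_eq_zero.mp this).resolve_right hdet
    have hB0 : B = 0 := by rw [hD0] at r12; linear_combination r12
    obtain ⟨aF, rfl⟩ := ch_mem (hint a) (by rw [← hσ]; linear_combination hA0 - hA)
    obtain ⟨bF, rfl⟩ := ch_mem (hint b) (by rw [← hσ]; linear_combination hB0 - hB)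
    obtain ⟨dF, rfl⟩ := ch_mem (hint d) (by rw [← hσ]; linear_combination hD0 - hD)
    refine ⟨aF, bF, 1, dF, ?_, by simpa using f0⟩
    intro h0
    apply hdet
    rw [← map_mul, ← map_sub, ← mul_one bF, h0, map_zero]

lemma ch_deg_cross {F K : Type*} [Field F] [Field K] [Algebra F K]
    [Algebra.IsAlgebraic F K] (q : ℕ) (α : K) :
    (minpoly F (crossRatio q α)).natDegree ∣ (minpoly F α).natDegree := by
  have hi : IsIntegral F α := Algebra.IsIntegral.isIntegral α
  have hmem : crossRatio q α ∈ IntermediateField.adjoin F {α} := by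
    have h := IntermediateField.mem_adjoin_simple_self F α
    have hp : ∀ k : ℕ, α ^ k ∈ IntermediateField.adjoin F {α} := fun k => pow_mem h k
    exact div_mem (mul_mem (sub_mem (hp _) (hp _)) (sub_mem (hp _) h))
      (mul_mem (sub_mem (hp _) h) (sub_mem (hp _) (hp _)))
  rw [← IntermediateField.adjoin.finrank hi]
  have := minpoly.degree_dvd (K := F) (L := IntermediateField.adjoin F {α})
    (x := ⟨crossRatio q α, hmem⟩) (Algebra.IsIntegral.isIntegral _)
  rwa [IntermediateField.minpoly_eq] at this

lemma ch_ne {F K : Type*} [Field F] [Fintype F] [Field K] [Algebra F K]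
    [Algebra.IsAlgebraic F K] {α : K} (h4 : 4 ≤ (minpoly F α).natDegree) (i j : ℕ)
    (hij : i < j) (hj : j < 4) : α ^ Fintype.card F ^ i ≠ α ^ Fintype.card F ^ j := by
  intro h
  have hi : IsIntegral F α := Algebra.IsIntegral.isIntegral α
  obtain ⟨k, rfl⟩ := Nat.exists_eq_add_of_lt hij
  have hinj : Function.Injective (fun x : K => x ^ Fintype.card F ^ i) := by
    have h1 := (FiniteField.frobeniusAlgHom F K).toRingHom.injective
    have h2 := Function.Injective.iterate h1 i
    convert h2 using 1
    clear h h2 hij hj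
    induction i with
    | zero => ext x; simp
    | succ i ih =>
      ext x
      rw [Function.iterate_succ_apply', ← ih]
      simp [pow_succ, pow_mul]
  have : α ^ Fintype.card F ^ (k + 1) = α := by
    apply hinj
    simp only
    rw [← pow_mul, ← pow_add, h]
    congr 2; ring
  have := Nat.le_of_dvd (by omega) (ch_deg_dvd hi this)
  omega

end CrossHelpers

/-- Let `q` be a prime power, `F` the field with `q` elements, and `f, g` monic
irreducible homogeneous bivariate polynomials over `F` of degrees `m, n ≥ 4`.  If
`Cross(f) = Cross(g)` — i.e., for roots `α` of `f(x,1)` and `β` of `g(x,1)` in an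
algebraic closure `K` of `F`, the characteristic polynomials over `F` of the cross
ratios of their Frobenius conjugates agree — then `f` and `g` lie in the same
`PGL₂(F)`-orbit: some scalar multiple of `g` equals `f(dx−by, −cx+ay)` for an
invertible matrix `[[a,b],[c,d]]`. -/
theorem cross_polynomial_determines_orbit
    {F : Type*} [Field F] [Fintype F] (q : ℕ) (hq : Fintype.card F = q)
    {K : Type*} [Field K] [Algebra F K] [IsAlgClosure F K]
    (m n : ℕ) (hm : 4 ≤ m) (hn : 4 ≤ n)
    (f g : MvPolynomial (Fin 2) F)
    (hfhom : f.IsHomogeneous m) (hghom : g.IsHomogeneous n)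
    (hfmonic : MonicHom f m) (hgmonic : MonicHom g n)
    (hfirr : Irreducible f) (hgirr : Irreducible g)
    (α β : K)
    (hα : Polynomial.aeval α (dehom f) = 0)
    (hβ : Polynomial.aeval β (dehom g) = 0)
    (hcross : charPolyOfElt F m (crossRatio q α) = charPolyOfElt F n (crossRatio q β)) :
    ∃ M : GL (Fin 2) F, ∃ e : Fˣ,
      substM (Matrix.adjugate (M : Matrix (Fin 2) (Fin 2) F)) f = (e : F) • g := by
  subst hq
  have : Algebra.IsAlgebraic F K := IsAlgClosure.isAlgebraic
  have : IsAlgClosed K := IsAlgClosure.isAlgClosed F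
  have : Normal F K := IsAlgClosure.normal F K
  have hint : ∀ x : K, IsIntegral F x := fun x => Algebra.IsIntegral.isIntegral x
  have hmα := ch_minpoly hfhom hfmonic hm hfirr hα
  have hmβ := ch_minpoly hghom hgmonic hn hgirr hβ
  have dα : (minpoly F α).natDegree = m := by rw [hmα, ch_natDegree hfhom hfmonic]
  have dβ : (minpoly F β).natDegree = n := by rw [hmβ, ch_natDegree hghom hgmonic]
  have vα := ch_deg_cross (F := F) (Fintype.card F) α
  have vβ := ch_deg_cross (F := F) (Fintype.card F) β
  rw [dα] at vα
  rw [dβ] at vβ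
  have hmn : m = n := by
    have := congrArg Polynomial.natDegree hcross
    rw [charPolyOfElt, charPolyOfElt, Polynomial.natDegree_pow, Polynomial.natDegree_pow,
      Nat.div_mul_cancel vα, Nat.div_mul_cancel vβ] at this
    exact this
  subst hmn
  have hmin : minpoly F (crossRatio (Fintype.card F) α) =
      minpoly F (crossRatio (Fintype.card F) β) := by
    have i1 := minpoly.irreducible (hint (crossRatio (Fintype.card F) α))
    have i2 := minpoly.irreducible (hint (crossRatio (Fintype.card F) β))
    have hpos : m / (minpoly F (crossRatio (Fintype.card F) α)).natDegree ≠ 0 := by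
      have := Nat.div_mul_cancel vα
      intro h0
      rw [h0] at this; omega
    have hdvd : minpoly F (crossRatio (Fintype.card F) α) ∣
        minpoly F (crossRatio (Fintype.card F) β) := by
      apply i1.prime.dvd_of_dvd_pow
      rw [charPolyOfElt, charPolyOfElt] at hcross
      rw [← hcross]
      exact dvd_pow_self _ hpos
    exact Polynomial.eq_of_monic_of_associated (minpoly.monic (hint _)) (minpoly.monic (hint _))
      (i1.associated_of_dvd i2 hdvd)
  obtain ⟨τ, hτ⟩ := (Normal.minpoly_eq_iff_mem_orbit K).mp hmin.symm
  have hτ : τ (crossRatio (Fintype.card F) α) = crossRatio (Fintype.card F) β := hτ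
  obtain ⟨γ, hγ⟩ : ∃ γ, γ = τ α := ⟨_, rfl⟩
  have hcr : crossRatio (Fintype.card F) γ = crossRatio (Fintype.card F) β := by
    rw [← hτ, hγ]; simp [crossRatio]
  have hγ0 : Polynomial.aeval γ (dehom f) = 0 := by
    rw [hγ, Polynomial.aeval_algHom_apply τ, hα, map_zero]
  have dγ : (minpoly F γ).natDegree = m := by rw [hγ, minpoly.algEquiv_eq, dα]
  have nγ := ch_ne (F := F) (α := γ) (by omega)
  have nβ := ch_ne (F := F) (α := β) (by omega)
  obtain ⟨a, b, c, d, hdet, habcd⟩ := ch_key (FiniteField.frobeniusAlgHom F K)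
    (fun x => by simp)
    (γ ^ Fintype.card F ^ 0) (γ ^ Fintype.card F ^ 1) (γ ^ Fintype.card F ^ 2)
    (γ ^ Fintype.card F ^ 3)
    (β ^ Fintype.card F ^ 0) (β ^ Fintype.card F ^ 1) (β ^ Fintype.card F ^ 2)
    (β ^ Fintype.card F ^ 3)
    (by simp) (by simp [← pow_mul, ← pow_succ]; ring) (by simp [← pow_mul, ← pow_succ])
    (by simp) (by simp [← pow_mul, ← pow_succ]; ring) (by simp [← pow_mul, ← pow_succ])
    (nγ 0 1 (by omega) (by omega)) (nγ 1 2 (by omega) (by omega))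
    (nγ 1 3 (by omega) (by omega)) (nγ 2 3 (by omega) (by omega))
    (nγ 0 3 (by omega) (by omega))
    (nβ 0 1 (by omega) (by omega)) (nβ 1 2 (by omega) (by omega))
    (nβ 1 3 (by omega) (by omega)) (nβ 2 3 (by omega) (by omega))
    (nβ 0 3 (by omega) (by omega))
    (by simpa [crossRatio] using hcr)
  simp only [pow_zero, pow_one] at habcd
  have hdetM : (!![a, b; c, d] : Matrix (Fin 2) (Fin 2) F).det ≠ 0 := by
    rwa [Matrix.det_fin_two_of]
  refine ⟨Matrix.GeneralLinearGroup.mkOfDetNeZero !![a, b; c, d] hdetM, ?_⟩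
  have hM : ((Matrix.GeneralLinearGroup.mkOfDetNeZero !![a, b; c, d] hdetM :
      GL (Fin 2) F) : Matrix (Fin 2) (Fin 2) F) = !![a, b; c, d] := rfl
  rw [hM, Matrix.adjugate_fin_two_of]
  have hdK : algebraMap F K a * algebraMap F K d - algebraMap F K b * algebraMap F K c ≠ 0 := by
    rw [← map_mul, ← map_mul, ← map_sub]
    exact (map_ne_zero (algebraMap F K)).mpr hdet
  have hcd : algebraMap F K c * γ + algebraMap F K d ≠ 0 := by
    intro h0
    apply hdK
    have h1 : algebraMap F K a * γ + algebraMap F K b = 0 := by rw [← habcd, h0, zero_mul]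
    have hc : algebraMap F K c = 0 ∨ algebraMap F K c ≠ 0 := em _
    rcases hc with hc | hc
    · have : algebraMap F K d = 0 := by simpa [hc] using h0
      rw [hc, this]; ring
    · linear_combination algebraMap F K a * h0 - algebraMap F K c * h1
  set N : Matrix (Fin 2) (Fin 2) F := !![d, -b; -c, a] with hN
  have hhom := ch_subst_hom hfhom N
  have hroot : Polynomial.aeval β (dehom (substM N f)) = 0 := by
    rw [ch_aeval_dehom, ch_aeval_subst]
    rw [ch_aeval_dehom] at hγ0
    have h1 := ch_scale hfhom (algebraMap F K c * γ + algebraMap F K d)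
      (fun i => algebraMap F K (N i 0) * (![β, 1] : Fin 2 → K) 0 +
        algebraMap F K (N i 1) * (![β, 1] : Fin 2 → K) 1)
      (fun i => (algebraMap F K a * algebraMap F K d - algebraMap F K b * algebraMap F K c) *
        (![γ, 1] : Fin 2 → K) i)
      (by
        intro i
        fin_cases i
        · simp [hN]; linear_combination (-algebraMap F K d) * habcd
        · simp [hN]; linear_combination (algebraMap F K c) * habcd)
    rw [ch_scale hfhom _ ![γ, 1] _ (fun i => rfl), hγ0, mul_zero] at h1
    exact (mul_eq_zero.mp h1.symm).resolve_left (pow_ne_zero _ hcd)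
  have hdvd : dehom g ∣ dehom (substM N f) := by
    rw [← hmβ]; exact minpoly.dvd F β hroot
  obtain ⟨r, hr⟩ := hdvd
  have hr0 : r.natDegree = 0 := by
    by_cases hz : r = 0
    · simp [hz]
    · have h1 := ch_natDegree_le hhom
      rw [hr, Polynomial.natDegree_mul (ch_monic hghom hgmonic).ne_zero hz,
        ch_natDegree hghom hgmonic] at h1
      omega
  obtain ⟨e, rfl⟩ : ∃ e, r = Polynomial.C e := ⟨_, Polynomial.eq_C_of_natDegree_eq_zero hr0⟩
  have heq : substM N f = e • g := by
    rw [← ch_hom_dehom hhom, hr, mul_comm, Polynomial.homogenize_C_mul, ch_hom_dehom hghom,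
      MvPolynomial.C_mul']
  have he : e ≠ 0 := by
    rintro rfl
    rw [zero_smul] at heq
    have h1 := ch_aeval_subst (K := F) N f ![a, c]
    rw [heq, map_zero, ch_scale hfhom (a * d - b * c) ![1, 0] _ (by
      intro i; fin_cases i
      · simp [hN]; ring
      · simp [hN]; ring), ch_eval_one_zero hfhom hfmonic, mul_one] at h1
    exact pow_ne_zero _ hdet h1.symm
  exact ⟨Units.mk0 e he, heq⟩
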